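/- arXiv:1103.0875 — 6 statements merged into one kernel-verified Lean document; each statement's English description precedes it below -/
import Mathlib

section
/- (Proposition 3, necessary length.) Let C, D, m_h, m_v be positive integers with C ≥ 2D, m_h > D, and 1 ≤ m_v < m_v^N(C,D,m_h). Then for almost every choice of analysis filters h = (h_1,…,h_C) ∈ (ℂ^{m_h})^C (Lebesgue measure on ℂ^{C·m_h}) the following holds: for every integer n₀ with 0 ≤ ⌈n₀/D⌉ ≤ ⌊m_h/D⌋ + ⌊m_v/D⌋ − 2, there do not exist synthesis filters v_1,…,v_C ∈ ℂ^{m_v} such that the filter bank achieves perfect reconstruction with delay n₀. -/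
open MeasureTheory Finset

noncomputable section

/-- Extension by zero of a finite complex vector (positions `0,…,m-1`) to `ℤ`. -/
def extZ {m : ℕ} (f : Fin m → ℂ) : ℤ → ℂ :=
  fun n => ∑ k : Fin m, if ((k : ℕ) : ℤ) = n then f k else 0

/-- Perfect reconstruction with delay `n₀` for the `C`-channel, `D`-fold subsampled
filter bank with analysis filters `h` and synthesis filters `v`. -/
def PerfectReconstruction (C D : ℕ) {mh mv : ℕ}
    (h : Fin C → Fin mh → ℂ) (v : Fin C → Fin mv → ℂ) (n₀ : ℤ) : Prop :=
  ∀ n m : ℤ,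
    (∑ i : Fin C, ∑ᶠ k : ℤ, extZ (v i) (n - (D : ℤ) * k) * extZ (h i) ((D : ℤ) * k - m))
      = if n = m + n₀ then 1 else 0

/-- The `p`-th polyphase length `⌈(m - p)/D⌉`. -/
def polyLen (D m p : ℕ) : ℤ := ⌈((m : ℚ) - (p : ℚ)) / (D : ℚ)⌉

/-- The necessary-length condition: `⌊m_v/D⌋ ≥ 1` and
`∑_{p=0}^{D-1} ⌊(m_{h;p} - 1)/⌊m_v/D⌋⌋ ≤ C - D`. -/
def NecLenCond (C D mh mv : ℕ) : Prop :=
  1 ≤ mv / D ∧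
    ∑ p ∈ Finset.range D, ⌊((polyLen D mh p : ℚ) - 1) / ((mv / D : ℕ) : ℚ)⌋
      ≤ (C : ℤ) - (D : ℤ)

/-- The necessary length `m_v^N(C,D,m_h)`: the least `m_v` satisfying the
necessary-length condition. -/
def mvN (C D mh : ℕ) : ℕ := sInf {mv : ℕ | NecLenCond C D mh mv}

lemma extZ_eq {m : ℕ} (f : Fin m → ℂ) (n : ℤ) (h0 : n < 0 ∨ (m:ℤ) ≤ n) : extZ f n = 0 := by
  unfold extZ
  apply Finset.sum_eq_zero
  intro k _
  rw [if_neg]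
  have := k.2
  omega

lemma extZ_single {m : ℕ} (b : Fin m) (n : ℤ) :
    extZ (Pi.single b (1:ℂ)) n = if ((b : ℕ) : ℤ) = n then 1 else 0 := by
  unfold extZ
  rw [Finset.sum_eq_single b]
  · simp
  · intro k _ hk
    simp [hk]
  · simp

lemma extZ_add {m : ℕ} (f g : Fin m → ℂ) (n : ℤ) : extZ (f + g) n = extZ f n + extZ g n := by
  unfold extZ
  rw [← Finset.sum_add_distrib]
  apply Finset.sum_congr rfl
  intro k _
  split_ifs <;> simp

lemma extZ_smul {m : ℕ} (t : ℂ) (f : Fin m → ℂ) (n : ℤ) : extZ (t • f) n = t * extZ f n := by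
  unfold extZ
  rw [Finset.mul_sum]
  apply Finset.sum_congr rfl
  intro k _
  split_ifs <;> simp

lemma continuous_extZ {m : ℕ} (n : ℤ) : Continuous (fun f : Fin m → ℂ => extZ f n) := by
  unfold extZ
  apply continuous_finset_sum
  intro k _
  split_ifs <;> fun_prop

/-- The consequence of PR on the shortest synthesis polyphase. -/
lemma PR_row (C D mh mv : ℕ) (hD : 0 < D) (h : Fin C → Fin mh → ℂ) (v : Fin C → Fin mv → ℂ)
    (n₀ : ℤ) (H : PerfectReconstruction C D h v n₀) (x : ℤ) :
    ∑ i : Fin C, ∑ a : Fin (mv / D), extZ (h i) (x - D * (a : ℕ)) *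
      extZ (v i) (D - 1 + D * (a : ℕ)) = if x = n₀ - D + 1 then 1 else 0 := by
  have h1 := H (D - 1) (-x)
  have e : ((D : ℤ) - 1 = -x + n₀) ↔ x = n₀ - D + 1 := by constructor <;> intro h <;> omega
  simp only [e] at h1
  rw [← h1]
  apply Finset.sum_congr rfl
  intro i _
  have hinj : Function.Injective (fun a : Fin (mv / D) => -(((a : ℕ)) : ℤ)) := by
    intro a b hab
    simp only [neg_inj, Nat.cast_inj] at hab
    exact Fin.ext hab
  rw [finsum_eq_sum_of_support_subset (s := Finset.univ.map ⟨_, hinj⟩)]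
  · rw [Finset.sum_map]
    apply Finset.sum_congr rfl
    intro a _
    simp only [Function.Embedding.coeFn_mk]
    rw [mul_comm]
    congr 2 <;> ring
  · intro k hk
    simp only [Finset.coe_map, Function.Embedding.coeFn_mk, Finset.coe_univ, Set.image_univ,
      Set.mem_range]
    have hk1 : extZ (v i) ((D:ℤ) - 1 - D * k) ≠ 0 := fun h0 => hk (by simp [h0])
    have hk2 : 0 ≤ (D:ℤ) - 1 - D * k ∧ (D:ℤ) - 1 - D * k < mv := by
      by_contra hc
      apply hk1
      apply extZ_eq
      omega
    have hDz : (0:ℤ) < D := by exact_mod_cast hD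
    have hk3 : k ≤ 0 := by
      by_contra hc
      nlinarith
    have hk4 : (-k).toNat < mv / D := by
      rw [Nat.lt_iff_add_one_le, Nat.le_div_iff_mul_le hD]
      zify
      rw [Int.toNat_of_nonneg (by omega)]
      nlinarith
    exact ⟨⟨_, hk4⟩, by simp; omega⟩

/-- The matrix. -/
def Bmat (C D L mh : ℕ) (b : Fin C → Fin mh) (h : Fin C → Fin mh → ℂ) :
    Matrix (Fin C × Fin L) (Fin C × Fin L) ℂ :=
  fun r c => extZ (h c.1) ((((b r.1 : ℕ) : ℤ) + D * (r.2 : ℕ)) - D * (c.2 : ℕ))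

lemma ae_det (C D L mh : ℕ) (b : Fin C → Fin mh)
    (hb : ∀ i i' : Fin C, ∀ a a' : Fin L, (b i : ℕ) + D * (a : ℕ) = (b i' : ℕ) + D * (a' : ℕ) →
      i = i' ∧ a = a') :
    ∀ᵐ h ∂(volume : Measure (Fin C → Fin mh → ℂ)), (Bmat C D L mh b h).det ≠ 0 := by
  let hs : Fin C → Fin mh → ℂ := fun i => Pi.single (b i) 1
  let ℓ : ℂ →ₗ[ℂ] (Fin C → Fin mh → ℂ) := LinearMap.toSpanSingleton ℂ _ hs
  have hmeas : MeasurableSet {h : Fin C → Fin mh → ℂ | (Bmat C D L mh b h).det ≠ 0} := by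
    apply IsOpen.measurableSet
    apply isOpen_ne_fun _ continuous_const
    apply Continuous.matrix_det
    apply continuous_matrix
    intro r c
    exact (continuous_extZ _).comp (continuous_apply _)
  haveI i1 : (volume : Measure (Fin mh → ℂ)).IsAddHaarMeasure := inferInstance
  haveI i2 : (volume : Measure (Fin C → Fin mh → ℂ)).IsAddHaarMeasure :=
    MeasureTheory.Measure.instIsAddHaarMeasureForallVolumeOfMeasurableAddOfSigmaFinite
  apply MeasureTheory.ae_mem_of_ae_add_linearMap_mem ℓ (volume : Measure ℂ) volume hmeas
  intro y
  have key : ∀ t : ℂ, Bmat C D L mh b (y + ℓ t) = Matrix.scalar _ t - (- Bmat C D L mh b y) := by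
    intro t
    ext r c
    have : (y + ℓ t) c.1 = y c.1 + t • hs c.1 := by
      simp [ℓ]
    simp only [Bmat, this, extZ_add, extZ_smul, hs, extZ_single, Matrix.sub_apply,
      Matrix.neg_apply, Matrix.scalar_apply, Matrix.diagonal_apply]
    have e : (((b c.1 : ℕ) : ℤ) = ((b r.1 : ℕ) : ℤ) + D * (r.2 : ℕ) - D * (c.2 : ℕ)) ↔ r = c := by
      constructor
      · intro h
        have := hb r.1 c.1 r.2 c.2 (by zify; linarith)
        exact Prod.ext this.1 this.2
      · rintro rfl
        ring
    simp only [e]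
    split_ifs <;> ring
  have hfin : {t : ℂ | ¬ (Bmat C D L mh b (y + ℓ t)).det ≠ 0}.Finite := by
    apply ((- Bmat C D L mh b y).charpoly.roots.toFinset.finite_toSet).subset
    intro t ht
    simp only [not_not, Set.mem_setOf_eq, key] at ht
    simp only [Finset.mem_coe, Multiset.mem_toFinset]
    rw [Polynomial.mem_roots (Matrix.charpoly_monic _).ne_zero, Polynomial.IsRoot,
      Matrix.eval_charpoly]
    exact ht
  exact hfin.measure_zero _

lemma exists_bases (C D L mh : ℕ) (hD : 0 < D) (hL : 0 < L) (hmh : D < mh)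
    (hsum : (C : ℤ) - (D : ℤ) < ∑ p ∈ Finset.range D, ⌊((polyLen D mh p : ℚ) - 1) / (L : ℚ)⌋)
    (s : ℤ) :
    ∃ b : Fin C → Fin mh, (∀ i i' : Fin C, ∀ a a' : Fin L,
      (b i : ℕ) + D * (a : ℕ) = (b i' : ℕ) + D * (a' : ℕ) → i = i' ∧ a = a') ∧
      ∀ i, ∀ a : Fin L, ((b i : ℕ) : ℤ) + D * (a : ℕ) ≠ s := by
  classical
  let f : ℕ → ℤ := fun p => ⌊((polyLen D mh p : ℚ) - 1) / (L : ℚ)⌋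
  have hLq : (0:ℚ) < L := by exact_mod_cast hL
  have hDq : (0:ℚ) < D := by exact_mod_cast hD
  have hf0 : ∀ p ∈ Finset.range D, 0 ≤ f p := by
    intro p hp
    have hp := Finset.mem_range.1 hp
    apply Int.floor_nonneg.2
    apply div_nonneg _ hLq.le
    have : 0 < polyLen D mh p := by
      apply Int.ceil_pos.2
      apply div_pos _ hDq
      have : (p:ℚ) < mh := by exact_mod_cast hp.trans hmh
      linarith
    have : (1:ℚ) ≤ polyLen D mh p := by exact_mod_cast this
    linarith
  let T : Finset (Σ _ : ℕ, ℕ) := (Finset.range D).sigma (fun p => Finset.range ((f p).toNat + 1))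
  have hT : C + 1 ≤ T.card := by
    rw [Finset.card_sigma]
    zify
    simp only [Finset.card_range]
    have : ∑ p ∈ Finset.range D, ((((f p).toNat + 1 : ℕ)) : ℤ) = ∑ p ∈ Finset.range D, (f p + 1) := by
      apply Finset.sum_congr rfl
      intro p hp
      have := hf0 p hp
      push_cast
      rw [Int.toNat_of_nonneg this]
    rw [this, Finset.sum_add_distrib]
    simp only [Finset.sum_const, Finset.card_range]
    simp only [f, nsmul_eq_mul, mul_one]
    omega
  -- uniqueness of decomposition
  have huniq : ∀ x ∈ T, ∀ y ∈ T, ∀ a a' : ℕ, a < L → a' < L →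
      D * (L * x.2) + x.1 + D * a = D * (L * y.2) + y.1 + D * a' → x = y ∧ a = a' := by
    rintro ⟨p, j⟩ hx ⟨q, k⟩ hy a a' ha ha' h
    simp only [T, Finset.mem_sigma, Finset.mem_range] at hx hy h
    have h1 : D * (L * j + a) + p = D * (L * k + a') + q := by linarith
    have hpq : p = q := by
      have := congrArg (· % D) h1
      simpa [Nat.mul_add_mod, Nat.mod_eq_of_lt hx.1, Nat.mod_eq_of_lt hy.1] using this
    subst hpq
    have h2 : L * j + a = L * k + a' := Nat.eq_of_mul_eq_mul_left hD (by omega)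
    have h3 : a = a' := by
      have := congrArg (· % L) h2
      simpa [Nat.mul_add_mod, Nat.mod_eq_of_lt ha, Nat.mod_eq_of_lt ha'] using this
    subst h3
    have h4 : j = k := Nat.eq_of_mul_eq_mul_left hL (by omega)
    subst h4
    exact ⟨rfl, rfl⟩
  have hlt : ∀ x ∈ T, D * (L * x.2) + x.1 < mh := by
    rintro ⟨p, j⟩ hx
    simp only [T, Finset.mem_sigma, Finset.mem_range] at hx ⊢
    have h1 : (j : ℤ) ≤ f p := by
      have := hf0 p (Finset.mem_range.2 hx.1)
      omega
    have h2 := Int.le_floor.1 h1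
    rw [le_div_iff₀ hLq] at h2
    have h3 : (polyLen D mh p : ℚ) < ((mh:ℚ) - p) / D + 1 := Int.ceil_lt_add_one _
    have h4 : (j:ℚ) * L < ((mh:ℚ) - p) / D := by push_cast at h2; linarith
    rw [lt_div_iff₀ hDq] at h4
    have : ((D * (L * j) + p : ℕ) : ℚ) < mh := by push_cast; linarith
    exact_mod_cast this
  let bad : (Σ _ : ℕ, ℕ) → Prop := fun x => ∃ a : ℕ, a < L ∧ ((D * (L * x.2) + x.1 + D * a : ℕ) : ℤ) = s
  have hbad : (T.filter bad).card ≤ 1 := by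
    rw [Finset.card_le_one]
    intro x hx y hy
    rw [Finset.mem_filter] at hx hy
    obtain ⟨hx, a, ha, h1⟩ := hx
    obtain ⟨hy, a', ha', h2⟩ := hy
    exact (huniq x hx y hy a a' ha ha' (by exact_mod_cast h1.trans h2.symm)).1
  have hgood : C ≤ (T.filter (fun x => ¬ bad x)).card := by
    have := Finset.card_filter_add_card_filter_not (s := T) bad
    omega
  obtain ⟨g⟩ : Nonempty (Fin C ↪ (T.filter (fun x => ¬ bad x))) :=
    Function.Embedding.nonempty_of_card_le (by simpa using hgood)
  have hg : ∀ i, (g i).1 ∈ T ∧ ¬ bad (g i).1 := fun i => Finset.mem_filter.1 (g i).2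
  refine ⟨fun i => ⟨D * (L * (g i).1.2) + (g i).1.1, hlt _ (hg i).1⟩, ?_, ?_⟩
  · intro i i' a a' h
    have := huniq _ (hg i).1 _ (hg i').1 a a' a.2 a'.2 h
    exact ⟨g.injective (Subtype.ext this.1), Fin.ext this.2⟩
  · intro i a h
    apply (hg i).2
    exact ⟨a, a.2, by push_cast at h ⊢; exact h⟩

/-- Proposition 3 (necessary length): if `C ≥ 2D`, `m_h > D` and
`1 ≤ m_v < m_v^N(C,D,m_h)`, then for almost every analysis bank `h`, no length-`m_v`
synthesis bank achieves perfect reconstruction with any admissible delay `n₀`. -/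
theorem necLength_generic_noPR (C D mh mv : ℕ) (hC : 0 < C) (hD : 0 < D)
    (hmhpos : 0 < mh) (hCD : 2 * D ≤ C) (hmh : D < mh)
    (hmvpos : 1 ≤ mv) (hmv : mv < mvN C D mh) :
    ∀ᵐ h ∂(volume : Measure (Fin C → Fin mh → ℂ)),
      ∀ n₀ : ℤ, 0 ≤ ⌈(n₀ : ℚ) / (D : ℚ)⌉ →
        ⌈(n₀ : ℚ) / (D : ℚ)⌉ ≤ ((mh / D : ℕ) : ℤ) + ((mv / D : ℕ) : ℤ) - 2 →
        ¬ ∃ v : Fin C → Fin mv → ℂ, PerfectReconstruction C D h v n₀ := by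
  have hnot : ¬ NecLenCond C D mh mv := Nat.notMem_of_lt_sInf hmv
  rw [ae_all_iff]
  intro n₀
  rcases Nat.eq_zero_or_pos (mv / D) with hL | hL
  · refine Filter.Eventually.of_forall ?_
    rintro h - - ⟨v, H⟩
    have h1 := PR_row C D mh mv hD h v n₀ H (n₀ - D + 1)
    haveI : IsEmpty (Fin (mv / D)) := by rw [hL]; infer_instance
    simp at h1
  · have hsum : (C : ℤ) - (D : ℤ) <
        ∑ p ∈ Finset.range D, ⌊((polyLen D mh p : ℚ) - 1) / ((mv / D : ℕ) : ℚ)⌋ := by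
      by_contra hc
      exact hnot ⟨hL, not_lt.1 hc⟩
    obtain ⟨b, hb, hbs⟩ := exists_bases C D (mv / D) mh hD hL hmh hsum (n₀ - D + 1)
    filter_upwards [ae_det C D (mv / D) mh b hb] with h hdet
    rintro - - ⟨v, H⟩
    have hrow := PR_row C D mh mv hD h v n₀ H
    let w : Fin C × Fin (mv / D) → ℂ := fun c => extZ (v c.1) (D - 1 + D * ((c.2 : ℕ) : ℤ))
    have hw : Matrix.mulVec (Bmat C D (mv / D) mh b h) w = 0 := by
      ext r
      have := hrow (((b r.1 : ℕ) : ℤ) + D * (r.2 : ℕ))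
      rw [if_neg (hbs _ _)] at this
      simp only [Matrix.mulVec, dotProduct, Bmat, w, Fintype.sum_prod_type, Pi.zero_apply]
      exact this
    have hw0 := Matrix.eq_zero_of_mulVec_eq_zero hdet hw
    have h1 := hrow (n₀ - D + 1)
    rw [if_pos rfl, Finset.sum_eq_zero] at h1
    · exact zero_ne_one h1
    · intro i _
      apply Finset.sum_eq_zero
      intro a _
      have : extZ (v i) (D - 1 + D * ((a : ℕ) : ℤ)) = 0 := congrFun hw0 (i, a)
      rw [this, mul_zero]
end
end

section
/- (Lemma 2, at least 2-fold oversampling is required.) Let C, D, m_h be positive integers with m_h ≥ 2D and C < 2D. Then there is no positive integer m_v with ⌊m_v/D⌋ ≥ 1 satisfying ∑_{p=0}^{D−1} ⌈(⌈(m_h − p)/D⌉ − 1)/⌊m_v/D⌋⌉ ≤ C − D; that is, the sufficient-length condition is satisfied by no finite m_v. -/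
open Finset

/-- The sufficient-length condition: `⌊m_v/D⌋ ≥ 1` and
`∑_{p=0}^{D-1} ⌈(m_{h;p} - 1)/⌊m_v/D⌋⌉ ≤ C - D`. -/
def SuffLenCond (C D mh mv : ℕ) : Prop :=
  1 ≤ mv / D ∧
    ∑ p ∈ Finset.range D, ⌈((polyLen D mh p : ℚ) - 1) / ((mv / D : ℕ) : ℚ)⌉
      ≤ (C : ℤ) - (D : ℤ)

/-- Lemma 2: if `m_h ≥ 2D` and `C < 2D`, no positive integer `m_v` satisfies the
sufficient-length condition. -/
theorem no_suffLength_if_undersampled (C D mh : ℕ) (hC : 0 < C) (hD : 0 < D)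
    (hmhpos : 0 < mh) (hmh : 2 * D ≤ mh) (hCD : C < 2 * D) :
    ¬ ∃ mv : ℕ, 0 < mv ∧ SuffLenCond C D mh mv := by
  rintro ⟨mv, -, h1, h2⟩
  have key : ∀ p ∈ Finset.range D,
      (1 : ℤ) ≤ ⌈((polyLen D mh p : ℚ) - 1) / ((mv / D : ℕ) : ℚ)⌉ := by
    intro p hp
    have hpD : (p : ℚ) < D := by exact_mod_cast Finset.mem_range.mp hp
    have hD' : (0 : ℚ) < D := by exact_mod_cast hD
    have hm : (2 : ℚ) * D ≤ mh := by exact_mod_cast hmh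
    have hpl : 1 < polyLen D mh p := by
      unfold polyLen
      rw [Int.lt_ceil, lt_div_iff₀ hD']
      push_cast
      linarith
    have hpl' : (1 : ℚ) < (polyLen D mh p : ℚ) := by exact_mod_cast hpl
    have hv : (0 : ℚ) < ((mv / D : ℕ) : ℚ) := by exact_mod_cast h1
    have : 0 < ⌈((polyLen D mh p : ℚ) - 1) / ((mv / D : ℕ) : ℚ)⌉ :=
      Int.ceil_pos.mpr (div_pos (by linarith) hv)
    omega
  have hs := Finset.sum_le_sum key
  simp only [Finset.sum_const, Finset.card_range, nsmul_eq_mul, mul_one] at hs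
  have := hs.trans h2
  omega
end

section
/- (Proposition 4, relations between the length functionals.) Let C, D, m_h be positive integers with C ≥ 2D and m_h > D. Then max(D, m_v^L) ≤ m_v^N ≤ m_v^C ≤ m_v^S ≤ min(m_h, m_v^U), where m_v^L(C,D,m_h) := ⌈D·(m_h − D)/C⌉ and m_v^U(C,D,m_h) := D + ⌈D·(m_h − D)/(C + 1 − 2D)⌉, and m_v^N, m_v^C, m_v^S are the necessary, counting and sufficient lengths respectively (in particular m_v^S and m_v^N are finite under these hypotheses). -/
open Finset

noncomputable section

/-- The sufficient length `m_v^S(C,D,m_h)`. -/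
def mvS (C D mh : ℕ) : ℕ := sInf {mv : ℕ | SuffLenCond C D mh mv}

/-- The counting length `m_v^C(C,D,m_h) = D·⌈(m_h - D)/(C - D)⌉`. -/
def mvC (C D mh : ℕ) : ℤ := (D : ℤ) * ⌈((mh : ℚ) - (D : ℚ)) / ((C : ℚ) - (D : ℚ))⌉

/-- The closed-form lower bound `m_v^L(C,D,m_h) = ⌈D·(m_h - D)/C⌉`. -/
def mvL (C D mh : ℕ) : ℤ := ⌈(D : ℚ) * ((mh : ℚ) - (D : ℚ)) / (C : ℚ)⌉

/-- The closed-form upper bound `m_v^U(C,D,m_h) = D + ⌈D·(m_h - D)/(C + 1 - 2D)⌉`. -/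
def mvU (C D mh : ℕ) : ℤ :=
  (D : ℤ) + ⌈(D : ℚ) * ((mh : ℚ) - (D : ℚ)) / ((C : ℚ) + 1 - 2 * (D : ℚ))⌉

theorem polyLen_sum (D : ℕ) (hD : 0 < D) (m : ℕ) :
    ∑ p ∈ Finset.range D, polyLen D m p = (m : ℤ) := by
  obtain ⟨d, rfl⟩ : ∃ d, D = d + 1 := ⟨D - 1, by omega⟩
  have hd : (0 : ℚ) < ((d + 1 : ℕ) : ℚ) := by positivity
  induction m with
  | zero =>
    simp only [Nat.cast_zero]
    apply Finset.sum_eq_zero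
    intro p hp
    have hp' : (p : ℚ) < ((d + 1 : ℕ) : ℚ) := by exact_mod_cast Finset.mem_range.mp hp
    have hp0 : (0 : ℚ) ≤ p := by positivity
    unfold polyLen
    rw [Int.ceil_eq_iff]
    constructor
    · rw [lt_div_iff₀ hd]; push_cast at *; linarith
    · rw [div_le_iff₀ hd]; push_cast at *; linarith
  | succ m ih =>
    rw [Finset.sum_range_succ] at ih
    rw [Finset.sum_range_succ']
    have h1 : ∀ p, polyLen (d + 1) (m + 1) (p + 1) = polyLen (d + 1) m p := by
      intro p
      unfold polyLen
      congr 2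
      push_cast; ring
    have h2 : polyLen (d + 1) (m + 1) 0 = polyLen (d + 1) m d + 1 := by
      unfold polyLen
      rw [← Int.ceil_add_one]
      congr 1
      field_simp
      push_cast; ring
    simp only [h1, h2]
    push_cast
    linarith

theorem polyLen_sum_sub (D : ℕ) (hD : 0 < D) (m : ℕ) :
    ∑ p ∈ Finset.range D, ((polyLen D m p : ℚ) - 1) = (m : ℚ) - D := by
  have h := polyLen_sum D hD m
  rw [Finset.sum_sub_distrib]
  have h' : ∑ p ∈ Finset.range D, (polyLen D m p : ℚ) = m := by exact_mod_cast h
  simp [h']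

theorem le_ceil_sum (D : ℕ) (hD : 0 < D) (m k : ℕ) (hk : 1 ≤ k) :
    (m : ℚ) - D ≤ k * ((∑ p ∈ Finset.range D, ⌈((polyLen D m p : ℚ) - 1) / (k : ℚ)⌉ : ℤ) : ℚ) := by
  have hk' : (0 : ℚ) < k := by exact_mod_cast hk
  rw [← polyLen_sum_sub D hD m]
  push_cast
  rw [Finset.mul_sum]
  apply Finset.sum_le_sum
  intro p _
  have := Int.le_ceil (((polyLen D m p : ℚ) - 1) / (k : ℚ))
  rwa [div_le_iff₀' hk'] at this

theorem floor_sum_le (D : ℕ) (hD : 0 < D) (m k : ℕ) (hk : 1 ≤ k) :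
    k * ((∑ p ∈ Finset.range D, ⌊((polyLen D m p : ℚ) - 1) / (k : ℚ)⌋ : ℤ) : ℚ) ≤ (m : ℚ) - D := by
  have hk' : (0 : ℚ) < k := by exact_mod_cast hk
  rw [← polyLen_sum_sub D hD m]
  push_cast
  rw [Finset.mul_sum]
  apply Finset.sum_le_sum
  intro p _
  have := Int.floor_le (((polyLen D m p : ℚ) - 1) / (k : ℚ))
  rwa [le_div_iff₀' hk'] at this

theorem ceil_sum_le (D : ℕ) (hD : 0 < D) (m k : ℕ) (hk : 1 ≤ k) :
    k * ((∑ p ∈ Finset.range D, ⌈((polyLen D m p : ℚ) - 1) / (k : ℚ)⌉ : ℤ) : ℚ)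
      < (m : ℚ) - D + D * k := by
  have hk' : (0 : ℚ) < k := by exact_mod_cast hk
  have e : (m : ℚ) - D + D * k = ∑ p ∈ Finset.range D, (((polyLen D m p : ℚ) - 1) + k) := by
    rw [Finset.sum_add_distrib, polyLen_sum_sub D hD m]; simp
  rw [e]
  push_cast
  rw [Finset.mul_sum]
  apply Finset.sum_lt_sum_of_nonempty ⟨0, Finset.mem_range.mpr hD⟩
  intro p _
  have := Int.ceil_lt_add_one (((polyLen D m p : ℚ) - 1) / (k : ℚ))
  calc _ < k * (((polyLen D m p : ℚ) - 1) / (k : ℚ) + 1) := by gcongr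
    _ = _ := by field_simp

theorem le_floor_sum (D m k : ℕ) (hD : 0 < D) (hk : 1 ≤ k) :
    (m : ℚ) - D ≤
    k * ((∑ p ∈ Finset.range D, ⌊((polyLen D m p : ℚ) - 1) / (k : ℚ)⌋ : ℤ) : ℚ) + D * k := by
  have hk' : (0 : ℚ) < k := by exact_mod_cast hk
  have e : (D : ℚ) * k = ∑ p ∈ Finset.range D, (k : ℚ) := by simp
  rw [← polyLen_sum_sub D hD m, e]
  push_cast
  rw [Finset.mul_sum, ← Finset.sum_add_distrib]
  apply Finset.sum_le_sum
  intro p _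
  have := Int.lt_floor_add_one (((polyLen D m p : ℚ) - 1) / (k : ℚ))
  rw [div_lt_iff₀ hk'] at this
  linarith

/-- Proposition 4: if `C ≥ 2D` and `m_h > D`, then the sufficient and necessary lengths
are finite (the defining conditions are satisfiable) and
`max(D, m_v^L) ≤ m_v^N ≤ m_v^C ≤ m_v^S ≤ min(m_h, m_v^U)`. -/
theorem length_functional_relations (C D mh : ℕ) (hD : 0 < D) (hCD : 2 * D ≤ C)
    (hmh : D < mh) :
    (∃ mv : ℕ, SuffLenCond C D mh mv) ∧ (∃ mv : ℕ, NecLenCond C D mh mv) ∧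
    max (D : ℤ) (mvL C D mh) ≤ (mvN C D mh : ℤ) ∧
    (mvN C D mh : ℤ) ≤ mvC C D mh ∧
    mvC C D mh ≤ (mvS C D mh : ℤ) ∧
    (mvS C D mh : ℤ) ≤ min (mh : ℤ) (mvU C D mh) := by
  have hDq : (0 : ℚ) < D := by exact_mod_cast hD
  have hCq : 2 * (D : ℚ) ≤ C := by exact_mod_cast hCD
  have hmq : (D : ℚ) < mh := by exact_mod_cast hmh
  have hS : SuffLenCond C D mh mh := by
    have hk : 1 ≤ mh / D := (Nat.one_le_div_iff hD).2 hmh.le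
    refine ⟨hk, ?_⟩
    have h2 : mh ≤ (mh / D + 1) * D := by
      have := Nat.lt_div_mul_add (a := mh) hD
      nlinarith
    generalize mh / D = q at hk h2 ⊢
    have hk' : (0 : ℚ) < (q : ℚ) := by exact_mod_cast hk
    have : ∑ p ∈ Finset.range D, ⌈((polyLen D mh p : ℚ) - 1) / (q : ℚ)⌉
        ≤ ∑ p ∈ Finset.range D, (1 : ℤ) := by
      apply Finset.sum_le_sum
      intro p _
      rw [Int.ceil_le, div_le_iff₀ hk']
      have h1 : polyLen D mh p ≤ (q : ℤ) + 1 := by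
        unfold polyLen
        rw [Int.ceil_le, div_le_iff₀ hDq]
        have h3 : (mh : ℚ) ≤ ((q : ℚ) + 1) * D := by exact_mod_cast h2
        have h4 : (0 : ℚ) ≤ p := by positivity
        push_cast at h3 ⊢
        linarith
      have h1' : (polyLen D mh p : ℚ) ≤ (q : ℚ) + 1 := by
        have := (Int.cast_le (R := ℚ)).2 h1
        push_cast at this
        exact this
      push_cast at h1' ⊢
      linarith
    refine this.trans ?_
    simp only [Finset.sum_const, Finset.card_range, nsmul_eq_mul, mul_one]
    push_cast
    omega
  have hCe : ∃ k : ℕ, 1 ≤ k ∧ ⌈((mh : ℚ) - (D : ℚ)) / ((C : ℚ) - (D : ℚ))⌉ = (k : ℤ) := by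
    have : 0 < ⌈((mh : ℚ) - (D : ℚ)) / ((C : ℚ) - (D : ℚ))⌉ := by
      rw [Int.ceil_pos]
      apply div_pos <;> linarith
    exact ⟨⌈((mh : ℚ) - (D : ℚ)) / ((C : ℚ) - (D : ℚ))⌉.toNat, by omega, by omega⟩
  obtain ⟨k, hk, hkC⟩ := hCe
  have hN : NecLenCond C D mh (D * k) := by
    unfold NecLenCond
    rw [Nat.mul_div_cancel_left k hD]
    refine ⟨hk, ?_⟩
    have h1 := floor_sum_le D hD mh k hk
    have hk' : (0 : ℚ) < k := by exact_mod_cast hk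
    have h2 := hkC.le
    rw [Int.ceil_le, div_le_iff₀ (by linarith)] at h2
    have h3 := le_of_mul_le_mul_left (h1.trans h2) hk'
    exact_mod_cast h3
  have hNm : NecLenCond C D mh (mvN C D mh) := Nat.sInf_mem (s := {mv | NecLenCond C D mh mv}) ⟨_, hN⟩
  have hSm : SuffLenCond C D mh (mvS C D mh) := Nat.sInf_mem (s := {mv | SuffLenCond C D mh mv}) ⟨_, hS⟩
  refine ⟨⟨_, hS⟩, ⟨_, hN⟩, max_le ?_ ?_, ?_, ?_, le_min ?_ ?_⟩
  · exact_mod_cast (Nat.one_le_div_iff hD).1 hNm.1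
  · generalize mvN C D mh = v at hNm
    obtain ⟨hj, hs⟩ := hNm
    have hv : v / D * D ≤ v := Nat.div_mul_le_self v D
    generalize v / D = j at hj hs hv
    have h1 := le_floor_sum D mh j hD hj
    have hs' : ((∑ p ∈ Finset.range D, ⌊((polyLen D mh p : ℚ) - 1) / (j : ℚ)⌋ : ℤ) : ℚ) ≤ (C : ℚ) - D := by
      exact_mod_cast hs
    have hv' : (j : ℚ) * D ≤ v := by exact_mod_cast hv
    have hj' : (0 : ℚ) < j := by exact_mod_cast hj
    have h2 := mul_le_mul_of_nonneg_left hs' hj'.le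
    unfold mvL
    rw [Int.ceil_le, div_le_iff₀ (by linarith)]
    have h3 : (mh : ℚ) - D ≤ j * C := by linarith
    have h4 := mul_le_mul_of_nonneg_left h3 hDq.le
    have h5 := mul_le_mul_of_nonneg_right hv' (by linarith : (0 : ℚ) ≤ C)
    push_cast
    linarith
  · unfold mvC
    rw [hkC]
    exact_mod_cast Nat.sInf_le (s := {mv | NecLenCond C D mh mv}) hN
  · generalize mvS C D mh = v at hSm
    obtain ⟨hj, hs⟩ := hSm
    have hv : D * (v / D) ≤ v := Nat.mul_div_le v D
    generalize v / D = j at hj hs hv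
    have h1 := le_ceil_sum D hD mh j hj
    have hs' : ((∑ p ∈ Finset.range D, ⌈((polyLen D mh p : ℚ) - 1) / (j : ℚ)⌉ : ℤ) : ℚ) ≤ (C : ℚ) - D := by
      exact_mod_cast hs
    have hj' : (0 : ℚ) < j := by exact_mod_cast hj
    have h2 := mul_le_mul_of_nonneg_left hs' hj'.le
    have h3 : ⌈((mh : ℚ) - (D : ℚ)) / ((C : ℚ) - (D : ℚ))⌉ ≤ (j : ℤ) := by
      rw [Int.ceil_le, div_le_iff₀ (by linarith)]
      push_cast
      linarith
    unfold mvC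
    calc _ ≤ (D : ℤ) * j := by gcongr
      _ ≤ v := by exact_mod_cast hv
  · exact_mod_cast Nat.sInf_le (s := {mv | SuffLenCond C D mh mv}) hS
  · have hE : (0 : ℚ) < (C : ℚ) + 1 - 2 * D := by linarith
    have hx0 : 0 ≤ ⌈(D : ℚ) * ((mh : ℚ) - (D : ℚ)) / ((C : ℚ) + 1 - 2 * (D : ℚ))⌉ := by
      apply Int.ceil_nonneg
      apply div_nonneg _ hE.le
      apply mul_nonneg hDq.le
      linarith
    unfold mvU
    obtain ⟨u, hu⟩ := Int.eq_ofNat_of_zero_le hx0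
    rw [hu]
    have h2 := hu.le
    rw [Int.ceil_le, div_le_iff₀ hE] at h2
    have hU : SuffLenCond C D mh (D + u) := by
      have hj : 1 ≤ (D + u) / D := (Nat.one_le_div_iff hD).2 (by omega)
      have hv : D + u < (D + u) / D * D + D := Nat.lt_div_mul_add hD
      refine ⟨hj, ?_⟩
      generalize (D + u) / D = j at hj hv
      have h1 := ceil_sum_le D hD mh j hj
      have hj' : (0 : ℚ) < j := by exact_mod_cast hj
      have hv' : (u : ℚ) ≤ D * j := by
        have : u ≤ D * j := by nlinarith
        exact_mod_cast this
      push_cast at h2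
      have h3 := h2.trans (mul_le_mul_of_nonneg_right hv' hE.le)
      rw [mul_assoc] at h3
      have h4 := le_of_mul_le_mul_left h3 hDq
      have h5 : (j : ℚ) * ((∑ p ∈ Finset.range D, ⌈((polyLen D mh p : ℚ) - 1) / (j : ℚ)⌉ : ℤ) : ℚ)
          < j * ((C : ℚ) - D + 1) := by linarith
      have h6 := lt_of_mul_lt_mul_left h5 hj'.le
      have h7 : (∑ p ∈ Finset.range D, ⌈((polyLen D mh p : ℚ) - 1) / (j : ℚ)⌉ : ℤ) < (C : ℤ) - D + 1 := by
        exact_mod_cast h6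
      omega
    exact_mod_cast Nat.sInf_le (s := {mv | SuffLenCond C D mh mv}) hU
end
end

section
/- (Corollary 1, gap bounds.) Let C, D, m_h be positive integers with D ≥ 2, C ≥ 2D and m_h > D. Then the following inequalities of real numbers hold: (i) m_v^S(C,D,m_h) − m_v^N(C,D,m_h) < D + 1 + 2·m_h / ((C/D)·(C/(D − 1/2) − 2)); (ii) m_v^U(C,D,m_h) − m_v^C(C,D,m_h) < D + 1 + m_h / ((C/D − 1)·((C − 1)/(D − 1) − 2)); (iii) m_v^C(C,D,m_h) − m_v^L(C,D,m_h) < D + 1 + m_h / ((C/D)·(C/D − 1)). -/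
open Finset

noncomputable section

lemma sum_div_nat (D : ℕ) (hD : 0 < D) (m : ℕ) : ∑ i ∈ Finset.range D, (m + i) / D = m := by
  induction m with
  | zero =>
    apply Finset.sum_eq_zero
    intro i hi
    rw [Finset.mem_range] at hi
    rw [zero_add]
    exact Nat.div_eq_of_lt hi
  | succ m ih =>
    have h1 := Finset.sum_range_succ (fun i => (m + i) / D) D
    have h2 := Finset.sum_range_succ' (fun i => (m + i) / D) D
    have h3 : (m + D) / D = m / D + 1 := Nat.add_div_right m hD
    have h4 : ∑ i ∈ Finset.range D, (m + 1 + i) / D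
        = ∑ i ∈ Finset.range D, (m + (i + 1)) / D := by
      apply Finset.sum_congr rfl
      intro i _
      congr 1
      omega
    simp only [add_zero] at h2
    omega

lemma polyLen_eq (D m p : ℕ) (hp : p < D) :
    polyLen D m p = (((m + (D - 1 - p)) / D : ℕ) : ℤ) := by
  have hD : (0 : ℚ) < D := by exact_mod_cast (by omega : 0 < D)
  have hD' : 0 < D := by omega
  unfold polyLen
  rw [Int.ceil_eq_iff]
  set q := (m + (D - 1 - p)) / D with hq
  have h1 : q * D ≤ m + (D - 1 - p) := Nat.div_mul_le_self _ _
  have h2 : m + (D - 1 - p) < (q + 1) * D := by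
    have := Nat.lt_mul_div_succ (m + (D - 1 - p)) hD'
    rw [mul_comm]; exact this
  have h1' : q * D + p < m + D := by omega
  have h2' : m ≤ q * D + p := by
    have : (q + 1) * D = q * D + D := by ring
    omega
  have h1q : (q : ℚ) * D + p < m + D := by exact_mod_cast h1'
  have h2q : (m : ℚ) ≤ q * D + p := by exact_mod_cast h2'
  constructor
  · rw [lt_div_iff₀ hD]; push_cast; linarith
  · rw [div_le_iff₀ hD]; push_cast; linarith

lemma sum_polyLen (D m : ℕ) (hD : 0 < D) : ∑ p ∈ Finset.range D, polyLen D m p = m := by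
  have h : ∑ p ∈ Finset.range D, polyLen D m p
      = ∑ p ∈ Finset.range D, (((m + (D - 1 - p)) / D : ℕ) : ℤ) := by
    apply Finset.sum_congr rfl
    intro p hp
    exact polyLen_eq D m p (Finset.mem_range.mp hp)
  rw [h, Finset.sum_range_reflect (fun i => (((m + i) / D : ℕ) : ℤ)) D]
  exact_mod_cast sum_div_nat D hD m

lemma sum_polyLen_div (D m : ℕ) (hD : 0 < D) (k : ℚ) :
    ∑ p ∈ Finset.range D, ((polyLen D m p : ℚ) - 1) / k = ((m : ℚ) - D) / k := by
  rw [← Finset.sum_div, Finset.sum_sub_distrib]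
  have h : ∑ p ∈ Finset.range D, (polyLen D m p : ℚ) = m := by
    exact_mod_cast sum_polyLen D m hD
  rw [h]; simp

lemma suff_of (C D mh mv : ℕ) (hD : 0 < D) (hk : 1 ≤ mv / D)
    (h : (mh : ℚ) - D < ((mv / D : ℕ) : ℚ) * (C + 1 - 2 * D)) : SuffLenCond C D mh mv := by
  refine ⟨hk, ?_⟩
  set k := mv / D
  have hk0 : (0 : ℚ) < k := by exact_mod_cast hk
  have h1 : (∑ p ∈ Finset.range D, (⌈((polyLen D mh p : ℚ) - 1) / (k : ℚ)⌉ : ℚ))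
      ≤ ∑ p ∈ Finset.range D, (((polyLen D mh p : ℚ) - 1) / (k : ℚ) + 1) :=
    Finset.sum_le_sum fun p _ => (Int.ceil_lt_add_one _).le
  rw [Finset.sum_add_distrib, sum_polyLen_div D mh hD] at h1
  simp only [Finset.sum_const, Finset.card_range, nsmul_eq_mul, mul_one] at h1
  have h2 : ((mh : ℚ) - D) / k < C + 1 - 2 * D := by
    rw [div_lt_iff₀ hk0]; linarith
  rw [← Int.lt_add_one_iff]
  have : (∑ p ∈ Finset.range D, (⌈((polyLen D mh p : ℚ) - 1) / (k : ℚ)⌉ : ℚ))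
      < C - D + 1 := by linarith
  exact_mod_cast this

lemma nec_imp (C D mh mv : ℕ) (hD : 0 < D) (h : NecLenCond C D mh mv) :
    (D : ℚ) * ((mh : ℚ) - D) ≤ mv * C := by
  obtain ⟨hk, h⟩ := h
  have hkD : ((mv / D : ℕ) : ℚ) * D ≤ mv := by exact_mod_cast Nat.div_mul_le_self mv D
  set k := mv / D
  have hk0 : (0 : ℚ) < k := by exact_mod_cast hk
  have h1 : ∑ p ∈ Finset.range D, (((polyLen D mh p : ℚ) - 1) / (k : ℚ) - 1)
      ≤ (∑ p ∈ Finset.range D, (⌊((polyLen D mh p : ℚ) - 1) / (k : ℚ)⌋ : ℚ)) :=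
    Finset.sum_le_sum fun p _ => (Int.sub_one_lt_floor _).le
  rw [Finset.sum_sub_distrib, sum_polyLen_div D mh hD] at h1
  simp only [Finset.sum_const, Finset.card_range, nsmul_eq_mul, mul_one] at h1
  have h3 : (∑ p ∈ Finset.range D, (⌊((polyLen D mh p : ℚ) - 1) / (k : ℚ)⌋ : ℚ))
      ≤ C - D := by exact_mod_cast h
  have h2 : ((mh : ℚ) - D) / k ≤ C := by linarith
  rw [div_le_iff₀ hk0] at h2
  have hD0 : (0 : ℚ) ≤ D := Nat.cast_nonneg D
  have hC0 : (0 : ℚ) ≤ C := Nat.cast_nonneg C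
  calc (D : ℚ) * ((mh : ℚ) - D) ≤ D * (C * k) := mul_le_mul_of_nonneg_left h2 hD0
    _ = (k * D) * C := by ring
    _ ≤ mv * C := mul_le_mul_of_nonneg_right hkD hC0

lemma nec_of_suff (C D mh mv : ℕ) (h : SuffLenCond C D mh mv) : NecLenCond C D mh mv :=
  ⟨h.1, (Finset.sum_le_sum fun _ _ => Int.floor_le_ceil _).trans h.2⟩

lemma suff_mvU (C D mh : ℕ) (hD : 2 ≤ D) (hCD : 2 * D ≤ C) (hmh : D < mh) :
    ∃ n : ℕ, (n : ℤ) = mvU C D mh ∧ SuffLenCond C D mh n := by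
  have hDq : (2 : ℚ) ≤ D := by exact_mod_cast hD
  have hCq : (2 : ℚ) * D ≤ C := by exact_mod_cast hCD
  have hmq : (D : ℚ) < mh := by exact_mod_cast hmh
  have hE : (0 : ℚ) < (C : ℚ) + 1 - 2 * (D : ℚ) := by linarith
  have hx : 0 ≤ (D : ℚ) * ((mh : ℚ) - (D : ℚ)) / ((C : ℚ) + 1 - 2 * (D : ℚ)) :=
    div_nonneg (mul_nonneg (by linarith) (by linarith)) hE.le
  have hc : 0 ≤ ⌈(D : ℚ) * ((mh : ℚ) - (D : ℚ)) / ((C : ℚ) + 1 - 2 * (D : ℚ))⌉ :=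
    Int.ceil_nonneg hx
  have hle := Int.le_ceil ((D : ℚ) * ((mh : ℚ) - (D : ℚ)) / ((C : ℚ) + 1 - 2 * (D : ℚ)))
  unfold mvU
  obtain ⟨c, hc'⟩ := Int.eq_ofNat_of_zero_le hc
  rw [hc'] at hle ⊢
  refine ⟨D + c, by push_cast; ring, suff_of _ _ _ _ (by omega) ?_ ?_⟩
  · exact (Nat.one_le_div_iff (by omega)).2 (by omega)
  · have h1 : D + c < ((D + c) / D + 1) * D := by
      have := Nat.lt_mul_div_succ (D + c) (by omega : 0 < D)
      rw [mul_comm]; exact this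
    set k := (D + c) / D
    have h2 : (c : ℚ) < k * D := by
      have : (D : ℚ) + c < (k + 1) * D := by exact_mod_cast h1
      linarith
    rw [div_le_iff₀ hE] at hle
    push_cast at hle
    have h3 := mul_lt_mul_of_pos_right h2 hE
    have h4 : (D : ℚ) * ((mh : ℚ) - D) < D * (k * ((C : ℚ) + 1 - 2 * D)) := by linarith
    exact lt_of_mul_lt_mul_left h4 (by linarith)

theorem gap_bounds (C D mh : ℕ) (hD : 2 ≤ D) (hCD : 2 * D ≤ C) (hmh : D < mh) :
    ((mvS C D mh : ℝ) - (mvN C D mh : ℝ)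
        < (D : ℝ) + 1 + 2 * (mh : ℝ) / (((C : ℝ) / D) * ((C : ℝ) / ((D : ℝ) - 1/2) - 2))) ∧
    (((mvU C D mh : ℤ) : ℝ) - ((mvC C D mh : ℤ) : ℝ)
        < (D : ℝ) + 1
          + (mh : ℝ) / (((C : ℝ) / D - 1) * (((C : ℝ) - 1) / ((D : ℝ) - 1) - 2))) ∧
    (((mvC C D mh : ℤ) : ℝ) - ((mvL C D mh : ℤ) : ℝ)
        < (D : ℝ) + 1 + (mh : ℝ) / (((C : ℝ) / D) * ((C : ℝ) / D - 1))) := by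
  have hDr : (2 : ℝ) ≤ D := by exact_mod_cast hD
  have hCr : (2 : ℝ) * D ≤ C := by exact_mod_cast hCD
  have hmr : (D : ℝ) < mh := by exact_mod_cast hmh
  have hE : (0 : ℝ) < (C : ℝ) + 1 - 2 * (D : ℝ) := by linarith
  have hF : (0 : ℝ) < (C : ℝ) - D := by linarith
  have hC : (0 : ℝ) < (C : ℝ) := by linarith
  have hD0 : (0 : ℝ) < (D : ℝ) := by linarith
  have hD1 : (0 : ℝ) < (D : ℝ) - 1 := by linarith
  have hD2 : (0 : ℝ) < 2 * (D : ℝ) - 1 := by linarith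
  have hU : ((mvU C D mh : ℤ) : ℝ) < D + (D * (mh - D) / (C + 1 - 2 * D) + 1) := by
    have := Int.ceil_lt_add_one ((D : ℚ) * ((mh : ℚ) - (D : ℚ)) / ((C : ℚ) + 1 - 2 * (D : ℚ)))
    have h : ((mvU C D mh : ℤ) : ℚ) < D + (D * (mh - D) / (C + 1 - 2 * D) + 1) := by
      unfold mvU; push_cast; linarith
    exact_mod_cast h
  have hC1 : ((mvC C D mh : ℤ) : ℝ) < D * ((mh - D) / (C - D) + 1) := by
    have := Int.ceil_lt_add_one (((mh : ℚ) - (D : ℚ)) / ((C : ℚ) - (D : ℚ)))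
    have hDq : (0 : ℚ) < D := by exact_mod_cast (by omega : 0 < D)
    have h : ((mvC C D mh : ℤ) : ℚ) < D * ((mh - D) / (C - D) + 1) := by
      unfold mvC; push_cast
      exact mul_lt_mul_of_pos_left this hDq
    exact_mod_cast h
  have hC2 : (D : ℝ) * ((mh - D) / (C - D)) ≤ ((mvC C D mh : ℤ) : ℝ) := by
    have := Int.le_ceil (((mh : ℚ) - (D : ℚ)) / ((C : ℚ) - (D : ℚ)))
    have hDq : (0 : ℚ) ≤ D := Nat.cast_nonneg D
    have h : (D : ℚ) * ((mh - D) / (C - D)) ≤ ((mvC C D mh : ℤ) : ℚ) := by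
      unfold mvC; push_cast
      exact mul_le_mul_of_nonneg_left this hDq
    exact_mod_cast h
  have hL : (D : ℝ) * (mh - D) / C ≤ ((mvL C D mh : ℤ) : ℝ) := by
    have h : (D : ℚ) * (mh - D) / C ≤ ((mvL C D mh : ℤ) : ℚ) := Int.le_ceil _
    exact_mod_cast h
  obtain ⟨n, hn, hsuff⟩ := suff_mvU C D mh hD hCD hmh
  have hS : (mvS C D mh : ℝ) ≤ ((mvU C D mh : ℤ) : ℝ) := by
    rw [← hn]
    exact_mod_cast Nat.sInf_le (s := {mv : ℕ | SuffLenCond C D mh mv}) hsuff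
  have hN : (D : ℝ) * (mh - D) / C ≤ (mvN C D mh : ℝ) := by
    have h1 : NecLenCond C D mh (mvN C D mh) :=
      Nat.sInf_mem (s := {mv : ℕ | NecLenCond C D mh mv}) ⟨n, nec_of_suff _ _ _ _ hsuff⟩
    have h2 := nec_imp C D mh _ (by omega) h1
    rw [div_le_iff₀ hC]
    exact_mod_cast h2
  refine ⟨?_, ?_, ?_⟩
  · have e : 2 * (mh : ℝ) / (((C : ℝ) / D) * ((C : ℝ) / ((D : ℝ) - 1/2) - 2))
        = D * mh / (C + 1 - 2 * D) - D * mh / C := by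
      have e1 : (C : ℝ) / ((D : ℝ) - 1/2) - 2 = 2 * (C + 1 - 2 * D) / (2 * D - 1) := by
        have : (D : ℝ) - 1/2 ≠ 0 := by linarith
        rw [div_sub' this, div_eq_div_iff this hD2.ne']; ring
      rw [e1]
      field_simp
      ring
    have e2 : (D : ℝ) * D / C ≤ D * D / (C + 1 - 2 * D) :=
      div_le_div_of_nonneg_left (by positivity) hE (by linarith)
    have e3 : (D : ℝ) * (mh - D) / C = D * mh / C - D * D / C := by ring
    have e4 : (D : ℝ) * (mh - D) / (C + 1 - 2 * D)
      = D * mh / (C + 1 - 2 * D) - D * D / (C + 1 - 2 * D) := by ring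
    linarith
  · have e : (mh : ℝ) / (((C : ℝ) / D - 1) * (((C : ℝ) - 1) / ((D : ℝ) - 1) - 2))
        = D * mh / (C + 1 - 2 * D) - D * mh / (C - D) := by
      have e1 : ((C : ℝ) - 1) / ((D : ℝ) - 1) - 2 = (C + 1 - 2 * D) / (D - 1) := by
        rw [div_sub' hD1.ne']; congr 1; ring
      have e0 : (C : ℝ) / D - 1 = (C - D) / D := by
        rw [div_sub' hD0.ne']; congr 1; ring
      rw [e1, e0, div_sub_div _ _ hE.ne' hF.ne', div_mul_div_comm, div_div_eq_mul_div,
        div_eq_div_iff (mul_pos hF hE).ne' (mul_pos hE hF).ne']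
      ring
    have e2 : (D : ℝ) * D / (C - D) ≤ D * D / (C + 1 - 2 * D) :=
      div_le_div_of_nonneg_left (by positivity) hE (by linarith)
    have e3 : (D : ℝ) * ((mh - D) / (C - D)) = D * mh / (C - D) - D * D / (C - D) := by ring
    have e4 : (D : ℝ) * (mh - D) / (C + 1 - 2 * D)
      = D * mh / (C + 1 - 2 * D) - D * D / (C + 1 - 2 * D) := by ring
    linarith
  · have e : (mh : ℝ) / (((C : ℝ) / D) * ((C : ℝ) / D - 1))
        = D * mh / (C - D) - D * mh / C := by
      have e0 : (C : ℝ) / D - 1 = (C - D) / D := by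
        rw [div_sub' hD0.ne']; congr 1; ring
      rw [e0]
      field_simp
      ring
    have e2 : (D : ℝ) * D / C ≤ D * D / (C - D) :=
      div_le_div_of_nonneg_left (by positivity) hF (by linarith)
    have e3 : (D : ℝ) * ((mh - D) / (C - D) + 1) = D * mh / (C - D) - D * D / (C - D) + D := by
      ring
    have e4 : (D : ℝ) * (mh - D) / C = D * mh / C - D * D / C := by ring
    linarith
end
end

section
/- (Lemma 8, part (i).) Let D, k, m_h be positive integers with k ≥ 2 and m_h > D, and set C = k·D. Then the sufficient length equals the counting length: m_v^S(C,D,m_h) = m_v^C(C,D,m_h) = D·⌈(m_h − D)/(C − D)⌉. -/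
open Finset

noncomputable section

theorem aux_sum (D : ℕ) (hD : 0 < D) (m : ℕ) : ∑ p ∈ Finset.range D, (m + p) / D = m := by
  induction m with
  | zero =>
    apply Finset.sum_eq_zero
    intro p hp
    rw [Nat.zero_add]
    exact Nat.div_eq_of_lt (Finset.mem_range.mp hp)
  | succ m ih =>
    have h1 := Finset.sum_range_succ (fun p => (m + p) / D) D
    have h2 := Finset.sum_range_succ' (fun p => (m + p) / D) D
    simp only [Nat.add_zero] at h1 h2
    rw [Nat.add_div_right m hD] at h1
    have h3 : ∑ p ∈ Finset.range D, (m + 1 + p) / D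
        = ∑ p ∈ Finset.range D, (m + (p + 1)) / D :=
      Finset.sum_congr rfl (fun p _ => by rw [show m + 1 + p = m + (p + 1) by ring])
    rw [h3]
    omega

theorem aux_poly (D m p : ℕ) (hp : p < D) : (((m + (D - 1 - p)) / D : ℕ) : ℤ) ≤ polyLen D m p := by
  have hDq : (0 : ℚ) < D := by exact_mod_cast (by omega : 0 < D)
  have hle := Int.le_ceil (((m : ℚ) - p) / D)
  change ((m : ℚ) - p) / D ≤ (polyLen D m p : ℚ) at hle
  rw [div_le_iff₀ hDq] at hle
  have hz : (m : ℤ) - p ≤ polyLen D m p * D := by exact_mod_cast hle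
  have hD : (0 : ℤ) < D := by omega
  rw [← Int.lt_add_one_iff]
  push_cast
  apply Int.ediv_lt_of_lt_mul hD
  have : ((D - 1 - p : ℕ) : ℤ) = D - 1 - p := by omega
  rw [this]
  linarith

theorem aux_poly_sum (D m : ℕ) (hD : 0 < D) : (m : ℤ) ≤ ∑ p ∈ Finset.range D, polyLen D m p := by
  have h := aux_sum D hD m
  rw [← Finset.sum_range_reflect] at h
  calc (m : ℤ) = ((∑ p ∈ Finset.range D, (m + (D - 1 - p)) / D : ℕ) : ℤ) := by rw [h]
    _ ≤ _ := by
      rw [Nat.cast_sum]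
      exact Finset.sum_le_sum (fun p hp => aux_poly D m p (Finset.mem_range.mp hp))

/-- Lemma 8, part (i): if `C = k·D` with `k ≥ 2` and `m_h > D`, then the sufficient
length equals the counting length `D·⌈(m_h - D)/(C - D)⌉`. -/
theorem suff_eq_counting_of_integer_oversampling (D k mh : ℕ) (hD : 0 < D) (hk : 2 ≤ k)
    (hmh : D < mh) :
    ((mvS (k * D) D mh : ℕ) : ℤ) = mvC (k * D) D mh ∧
    mvC (k * D) D mh
      = (D : ℤ) * ⌈((mh : ℚ) - (D : ℚ)) / (((k * D : ℕ) : ℚ) - (D : ℚ))⌉ := by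
  refine ⟨?_, rfl⟩
  have hDq : (0 : ℚ) < D := by exact_mod_cast hD
  have hkq : (2 : ℚ) ≤ k := by exact_mod_cast hk
  have hmq : (D : ℚ) < mh := by exact_mod_cast hmh
  have hden : (0 : ℚ) < ((k * D : ℕ) : ℚ) - D := by push_cast; nlinarith
  have hNpos : 0 < ⌈((mh : ℚ) - (D : ℚ)) / (((k * D : ℕ) : ℚ) - (D : ℚ))⌉ :=
    Int.ceil_pos.mpr (div_pos (by linarith) hden)
  have hNle := Int.le_ceil (((mh : ℚ) - (D : ℚ)) / (((k * D : ℕ) : ℚ) - (D : ℚ)))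
  have hNmin : ∀ z : ℤ, ((mh : ℚ) - (D : ℚ)) / (((k * D : ℕ) : ℚ) - (D : ℚ)) ≤ z →
    ⌈((mh : ℚ) - (D : ℚ)) / (((k * D : ℕ) : ℚ) - (D : ℚ))⌉ ≤ z := fun z hz => Int.ceil_le.mpr hz
  unfold mvC
  generalize ⌈((mh : ℚ) - (D : ℚ)) / (((k * D : ℕ) : ℚ) - (D : ℚ))⌉ = N at *
  lift N to ℕ using hNpos.le
  have hN : 0 < N := by exact_mod_cast hNpos
  have hNq : (0 : ℚ) < N := by exact_mod_cast hN
  rw [div_le_iff₀ hden] at hNle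
  have key : IsLeast {mv : ℕ | SuffLenCond (k * D) D mh mv} (D * N) := by
    constructor
    · refine ⟨by rw [Nat.mul_div_cancel_left _ hD]; exact hN, ?_⟩
      rw [Nat.mul_div_cancel_left _ hD]
      have hb : ∀ p ∈ Finset.range D, ⌈((polyLen D mh p : ℚ) - 1) / (N : ℚ)⌉ ≤ (k : ℤ) - 1 := by
        intro p _
        rw [Int.ceil_le, div_le_iff₀ hNq]
        have hp : polyLen D mh p ≤ ((k : ℤ) - 1) * N + 1 := by
          unfold polyLen
          rw [Int.ceil_le, div_le_iff₀ hDq]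
          have : (0 : ℚ) ≤ p := Nat.cast_nonneg p
          push_cast at hNle ⊢
          linarith
        have hp' : (polyLen D mh p : ℚ) ≤ ((k : ℚ) - 1) * N + 1 := by exact_mod_cast hp
        push_cast
        linarith
      refine (Finset.sum_le_sum hb).trans ?_
      simp only [Finset.sum_const, Finset.card_range, nsmul_eq_mul]
      push_cast
      linarith
    · rintro mv ⟨h1, h2⟩
      have hmv : D * (mv / D) ≤ mv := Nat.mul_div_le mv D
      refine le_trans (Nat.mul_le_mul_left D ?_) hmv
      generalize mv / D = n at *
      have hnq : (0 : ℚ) < n := by exact_mod_cast h1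
      have : (N : ℤ) ≤ (n : ℤ) := by
        apply hNmin
        rw [div_le_iff₀ hden]
        have hs : ((∑ p ∈ Finset.range D, ⌈((polyLen D mh p : ℚ) - 1) / (n : ℚ)⌉ : ℤ) : ℚ)
            ≤ ((k * D : ℕ) : ℚ) - D := by exact_mod_cast h2
        have hs2 : ∑ p ∈ Finset.range D, ((polyLen D mh p : ℚ) - 1) / (n : ℚ)
            ≤ ((k * D : ℕ) : ℚ) - D := by
          refine le_trans ?_ hs
          rw [Int.cast_sum]
          exact Finset.sum_le_sum (fun p _ => Int.le_ceil _)
        rw [← Finset.sum_div, div_le_iff₀ hnq, Finset.sum_sub_distrib] at hs2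
        have hm : (mh : ℚ) ≤ ∑ p ∈ Finset.range D, (polyLen D mh p : ℚ) := by
          exact_mod_cast aux_poly_sum D mh hD
        simp only [Finset.sum_const, Finset.card_range, nsmul_eq_mul, mul_one] at hs2
        simp only [Int.cast_natCast]
        linarith
      exact_mod_cast this
  unfold mvS
  rw [key.csInf_eq]
  push_cast
  rfl
end
end

section
/- (The sufficient length does not exceed the analysis filter length.) Let C, D, m_h be positive integers with C ≥ 2D and m_h > D. Then m_v = m_h satisfies the sufficient-length condition; more precisely, ∑_{p=0}^{D−1} ⌈(⌈(m_h − p)/D⌉ − 1)/⌊m_h/D⌋⌉ ≤ D ≤ C − D. Consequently m_v^S(C,D,m_h) ≤ m_h. -/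
open Finset

noncomputable section

/-- The sufficient length does not exceed the analysis filter length: for `C ≥ 2D` and
`m_h > D`, `m_v = m_h` satisfies the sufficient-length condition; more precisely
`∑_{p=0}^{D-1} ⌈(m_{h;p} - 1)/⌊m_h/D⌋⌉ ≤ D ≤ C - D`. Consequently
`m_v^S(C,D,m_h) ≤ m_h`. -/
theorem suffLength_le_analysisLength (C D mh : ℕ) (hD : 0 < D) (hCD : 2 * D ≤ C)
    (hmh : D < mh) :
    (∑ p ∈ Finset.range D, ⌈((polyLen D mh p : ℚ) - 1) / ((mh / D : ℕ) : ℚ)⌉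
        ≤ (D : ℤ)) ∧
    ((D : ℤ) ≤ (C : ℤ) - (D : ℤ)) ∧
    SuffLenCond C D mh mh ∧
    mvS C D mh ≤ mh := by
  have hq : 1 ≤ mh / D := (Nat.one_le_div_iff hD).2 hmh.le
  have hqQ : (0 : ℚ) < ((mh / D : ℕ) : ℚ) := by exact_mod_cast hq
  have hDQ : (0 : ℚ) < (D : ℚ) := by exact_mod_cast hD
  have hlt : mh < (mh / D + 1) * D := by
    rw [mul_comm]
    exact Nat.lt_mul_div_succ mh hD
  have hltQ : (mh : ℚ) < (((mh / D : ℕ) : ℚ) + 1) * (D : ℚ) := by exact_mod_cast hlt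
  have hpoly : ∀ p : ℕ, polyLen D mh p ≤ ((mh / D : ℕ) : ℤ) + 1 := by
    intro p
    unfold polyLen
    rw [Int.ceil_le, div_le_iff₀ hDQ, Int.cast_add, Int.cast_one, Int.cast_natCast]
    have hp : (0 : ℚ) ≤ (p : ℚ) := Nat.cast_nonneg p
    linarith
  have hsum : ∑ p ∈ Finset.range D, ⌈((polyLen D mh p : ℚ) - 1) / ((mh / D : ℕ) : ℚ)⌉
      ≤ (D : ℤ) := by
    have h : ∀ p ∈ Finset.range D,
        ⌈((polyLen D mh p : ℚ) - 1) / ((mh / D : ℕ) : ℚ)⌉ ≤ (1 : ℤ) := by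
      intro p _
      rw [Int.ceil_le, div_le_iff₀ hqQ, Int.cast_one, one_mul]
      have h1 : ((polyLen D mh p : ℤ) : ℚ) ≤ ((((mh / D : ℕ) : ℤ) + 1 : ℤ) : ℚ) :=
        Int.cast_le.2 (hpoly p)
      rw [Int.cast_add, Int.cast_one, Int.cast_natCast] at h1
      linarith
    have h2 := Finset.sum_le_sum h
    simpa using h2
  have hC : (D : ℤ) ≤ (C : ℤ) - (D : ℤ) := by omega
  have hS : SuffLenCond C D mh mh := ⟨hq, hsum.trans hC⟩
  exact ⟨hsum, hC, hS, Nat.sInf_le hS⟩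
end
end
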